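/- The antipode axiom for the form φ holds: in Γ, with θ := dx·x⁻¹ and φ := dy − dx·x⁻¹·y, one has S(φ)·1 + S(x)·φ − S(y)·θ = 0, where S(φ) = −q⁻¹·φ·x⁻¹ − θ·x⁻¹·y, S(x) = x⁻¹, S(y) = −x⁻¹·y; i.e. the identity −q⁻¹·φ·x⁻¹ − θ·x⁻¹·y + x⁻¹·φ + x⁻¹·y·θ = 0 holds in Γ. -/

import Mathlib

/-!
Every word is brought to the normal form in which `dx`, `dy` stand to the left of `y`, and `y` to
the left of `x⁻¹`. Conjugating the relations of `x` with `y`, `dx`, `dy` by `x⁻¹` gives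
`x⁻¹ y = q⁻¹ y x⁻¹`, `x⁻¹ dx = q dx x⁻¹` and `x⁻¹ dy = dy x⁻¹`. Moving `x⁻¹` and `y` to the right,
the four terms of the identity become combinations of `dy x⁻¹` and `dx y x⁻¹ x⁻¹`, with coefficients
`(-q⁻¹, q⁻²)`, `(0, -q⁻²)`, `(1, -q⁻¹)` and `(q⁻¹ - 1, q⁻¹)`, which add up to zero.
-/

open scoped TensorProduct
open MulOpposite

noncomputable section

/-- Relations for the extended quantum plane: `x*y = q•(y*x)`, `x*x⁻¹ = 1 = x⁻¹*x`.
Generators: `0 = x`, `1 = x⁻¹`, `2 = y`. -/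
inductive ARel (q : ℂ) : FreeAlgebra ℂ (Fin 3) → FreeAlgebra ℂ (Fin 3) → Prop
  | xy : ARel q (FreeAlgebra.ι ℂ 0 * FreeAlgebra.ι ℂ 2) (q • (FreeAlgebra.ι ℂ 2 * FreeAlgebra.ι ℂ 0))
  | xxinv : ARel q (FreeAlgebra.ι ℂ 0 * FreeAlgebra.ι ℂ 1) 1
  | xinvx : ARel q (FreeAlgebra.ι ℂ 1 * FreeAlgebra.ι ℂ 0) 1

/-- The (unital extension of the) quantum plane algebra `A`. -/
abbrev QA (q : ℂ) := RingQuot (ARel q)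

/-- The generator `x` of `A`. -/
def aX (q : ℂ) : QA q := RingQuot.mkAlgHom ℂ (ARel q) (FreeAlgebra.ι ℂ 0)

/-- The generator `x⁻¹` of `A`. -/
def aXinv (q : ℂ) : QA q := RingQuot.mkAlgHom ℂ (ARel q) (FreeAlgebra.ι ℂ 1)

/-- The generator `y` of `A`. -/
def aY (q : ℂ) : QA q := RingQuot.mkAlgHom ℂ (ARel q) (FreeAlgebra.ι ℂ 2)

/-- Relations for the differential algebra `Γ` of the extended quantum plane.
Generators: `0 = x`, `1 = x⁻¹`, `2 = y`, `3 = dx`, `4 = dy`. -/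
inductive GRel (q : ℂ) : FreeAlgebra ℂ (Fin 5) → FreeAlgebra ℂ (Fin 5) → Prop
  | xy : GRel q (FreeAlgebra.ι ℂ 0 * FreeAlgebra.ι ℂ 2) (q • (FreeAlgebra.ι ℂ 2 * FreeAlgebra.ι ℂ 0))
  | xxinv : GRel q (FreeAlgebra.ι ℂ 0 * FreeAlgebra.ι ℂ 1) 1
  | xinvx : GRel q (FreeAlgebra.ι ℂ 1 * FreeAlgebra.ι ℂ 0) 1
  | xdx : GRel q (FreeAlgebra.ι ℂ 0 * FreeAlgebra.ι ℂ 3) (q⁻¹ • (FreeAlgebra.ι ℂ 3 * FreeAlgebra.ι ℂ 0))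
  | xdy : GRel q (FreeAlgebra.ι ℂ 0 * FreeAlgebra.ι ℂ 4) (FreeAlgebra.ι ℂ 4 * FreeAlgebra.ι ℂ 0)
  | ydx : GRel q (FreeAlgebra.ι ℂ 2 * FreeAlgebra.ι ℂ 3)
      (q⁻¹ • (FreeAlgebra.ι ℂ 3 * FreeAlgebra.ι ℂ 2) +
        (q⁻¹ - 1) • (FreeAlgebra.ι ℂ 4 * FreeAlgebra.ι ℂ 0))
  | ydy : GRel q (FreeAlgebra.ι ℂ 2 * FreeAlgebra.ι ℂ 4) (q⁻¹ • (FreeAlgebra.ι ℂ 4 * FreeAlgebra.ι ℂ 2))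
  | dxdx : GRel q (FreeAlgebra.ι ℂ 3 * FreeAlgebra.ι ℂ 3) 0
  | dxdy : GRel q (FreeAlgebra.ι ℂ 3 * FreeAlgebra.ι ℂ 4) (-(FreeAlgebra.ι ℂ 4 * FreeAlgebra.ι ℂ 3))
  | dydy : GRel q (FreeAlgebra.ι ℂ 4 * FreeAlgebra.ι ℂ 4) 0

/-- The differential algebra `Γ` of the extended quantum plane. -/
abbrev QG (q : ℂ) := RingQuot (GRel q)

/-- The generator `x` of `Γ`. -/
def gX (q : ℂ) : QG q := RingQuot.mkAlgHom ℂ (GRel q) (FreeAlgebra.ι ℂ 0)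

/-- The generator `x⁻¹` of `Γ`. -/
def gXinv (q : ℂ) : QG q := RingQuot.mkAlgHom ℂ (GRel q) (FreeAlgebra.ι ℂ 1)

/-- The generator `y` of `Γ`. -/
def gY (q : ℂ) : QG q := RingQuot.mkAlgHom ℂ (GRel q) (FreeAlgebra.ι ℂ 2)

/-- The generator `dx` of `Γ`. -/
def gDX (q : ℂ) : QG q := RingQuot.mkAlgHom ℂ (GRel q) (FreeAlgebra.ι ℂ 3)

/-- The generator `dy` of `Γ`. -/
def gDY (q : ℂ) : QG q := RingQuot.mkAlgHom ℂ (GRel q) (FreeAlgebra.ι ℂ 4)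

/-- The form `θ = dx·x⁻¹` in `Γ`. -/
def theta (q : ℂ) : QG q := gDX q * gXinv q

/-- The form `φ = dy - dx·x⁻¹·y` in `Γ`. -/
def phi (q : ℂ) : QG q := gDY q - gDX q * gXinv q * gY q

/-- A `c`-commutation relation with `x` conjugates to a `c⁻¹`-commutation relation with `x⁻¹`. -/
lemma inv_mul_of_mul_eq_smul {R : Type*} [Ring R] [Algebra ℂ R] {x X a : R} {c : ℂ} (hc : c ≠ 0)
    (hxX : x * X = 1) (hXx : X * x = 1) (h : x * a = c • (a * x)) :
    X * a = c⁻¹ • (a * X) := by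
  have h1 : X * (x * a) * X = c • (X * a) := by
    rw [h, mul_smul_comm, smul_mul_assoc, mul_assoc, mul_assoc, hxX, mul_one]
  rw [← mul_assoc X, hXx, one_mul] at h1
  rw [h1, smul_smul, inv_mul_cancel₀ hc, one_smul]

lemma gX_mul_gXinv (q : ℂ) : gX q * gXinv q = 1 := by
  simpa [gX, gXinv] using RingQuot.mkAlgHom_rel ℂ (GRel.xxinv (q := q))

lemma gXinv_mul_gX (q : ℂ) : gXinv q * gX q = 1 := by
  simpa [gX, gXinv] using RingQuot.mkAlgHom_rel ℂ (GRel.xinvx (q := q))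

lemma gXinv_mul_gY (q : ℂ) (hq : q ≠ 0) : gXinv q * gY q = q⁻¹ • (gY q * gXinv q) :=
  inv_mul_of_mul_eq_smul hq (gX_mul_gXinv q) (gXinv_mul_gX q)
    (by simpa [gX, gY] using RingQuot.mkAlgHom_rel ℂ (GRel.xy (q := q)))

lemma gXinv_mul_gDX (q : ℂ) (hq : q ≠ 0) : gXinv q * gDX q = q • (gDX q * gXinv q) := by
  have h := inv_mul_of_mul_eq_smul (a := gDX q) (inv_ne_zero hq) (gX_mul_gXinv q) (gXinv_mul_gX q)
    (by simpa [gX, gDX] using RingQuot.mkAlgHom_rel ℂ (GRel.xdx (q := q)))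
  rwa [inv_inv] at h

lemma gXinv_mul_gDY (q : ℂ) : gXinv q * gDY q = gDY q * gXinv q := by
  have h := inv_mul_of_mul_eq_smul (a := gDY q) one_ne_zero (gX_mul_gXinv q) (gXinv_mul_gX q)
    (by simpa [gX, gDY] using RingQuot.mkAlgHom_rel ℂ (GRel.xdy (q := q)))
  rwa [inv_one, one_smul] at h

lemma gY_mul_gDX (q : ℂ) :
    gY q * gDX q = q⁻¹ • (gDX q * gY q) + (q⁻¹ - 1) • (gDY q * gX q) := by
  simpa only [map_mul, map_add, map_smul, gX, gY, gDX, gDY] using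
    RingQuot.mkAlgHom_rel ℂ (GRel.ydx (q := q))

/-- The antipode axiom for the form `φ`: `S(φ)·1 + S(x)·φ - S(y)·θ = 0` in `Γ`, i.e.
`-q⁻¹·φ·x⁻¹ - θ·x⁻¹·y + x⁻¹·φ + x⁻¹·y·θ = 0`. -/
theorem antipode_axiom_phi (q : ℂ) (hq : q ≠ 0) :
    -(q⁻¹ • (phi q * gXinv q)) - theta q * gXinv q * gY q +
      gXinv q * phi q + gXinv q * gY q * theta q = 0 := by
  have hy := gXinv_mul_gY q hq
  have hdx := gXinv_mul_gDX q hq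
  have hdy := gXinv_mul_gDY q
  have h1 : phi q * gXinv q =
      gDY q * gXinv q - q⁻¹ • (gDX q * gY q * gXinv q * gXinv q) := by
    rw [phi, sub_mul, mul_assoc (gDX q), hy]
    simp only [mul_smul_comm, smul_mul_assoc, mul_assoc]
  have hXXy : gXinv q * (gXinv q * gY q) = (q⁻¹ * q⁻¹) • (gY q * gXinv q * gXinv q) := by
    rw [hy, mul_smul_comm, ← mul_assoc, hy, smul_mul_assoc, smul_smul]
  have h2 : theta q * gXinv q * gY q =
      (q⁻¹ * q⁻¹) • (gDX q * gY q * gXinv q * gXinv q) := by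
    rw [theta, mul_assoc, mul_assoc, hXXy, mul_smul_comm]
    simp only [mul_assoc]
  have h3 : gXinv q * phi q =
      gDY q * gXinv q - q⁻¹ • (gDX q * gY q * gXinv q * gXinv q) := by
    rw [phi, mul_sub, hdy, ← mul_assoc, ← mul_assoc, hdx, smul_mul_assoc, smul_mul_assoc,
      mul_assoc, mul_assoc, hXXy, mul_smul_comm, smul_smul, mul_inv_cancel_left₀ hq]
    simp only [mul_assoc]
  have h4 : gXinv q * gY q * theta q =
      q⁻¹ • (gDX q * gY q * gXinv q * gXinv q) + (q⁻¹ - 1) • (gDY q * gXinv q) := by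
    have e : gXinv q * gY q * theta q = gXinv q * (gY q * gDX q) * gXinv q := by
      simp only [theta, mul_assoc]
    rw [e, gY_mul_gDX, mul_add, add_mul, mul_smul_comm, mul_smul_comm, smul_mul_assoc,
      smul_mul_assoc, ← mul_assoc (gXinv q) (gDX q), hdx, smul_mul_assoc, mul_assoc (gDX q) (gXinv q),
      hy, ← mul_assoc (gXinv q) (gDY q), hdy, mul_assoc (gDY q) (gXinv q), gXinv_mul_gX, mul_one,
      mul_smul_comm, smul_smul q, mul_inv_cancel₀ hq, one_smul]
    simp only [mul_assoc]
  rw [h1, h2, h3, h4]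
  module
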